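/- (Fan's minimax theorem) Let X be a nonempty compact Hausdorff topological space and Y an arbitrary nonempty set. Let f : X × Y → ℝ be such that for every y ∈ Y the function f(·,y) is lower semicontinuous on X. Suppose f is convex on X in the sense of Fan (for all x₁,x₂ ∈ X and α,β ∈ [0,1] with α+β=1 there exists x ∈ X with f(x,y) ≤ α f(x₁,y) + β f(x₂,y) for all y ∈ Y) and concave on Y in the sense of Fan (for all y₁,y₂ ∈ Y and α,β ∈ [0,1] with α+β=1 there exists y ∈ Y with f(x,y) ≥ α f(x,y₁) + β f(x,y₂) for all x ∈ X). Then the minimum over x ∈ X of sup_{y∈Y} f(x,y) is attained, and min_{x∈X} sup_{y∈Y} f(x,y) = sup_{y∈Y} min_{x∈X} f(x,y). -/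

import Mathlib

/-!
Statement 2: Ky Fan's minimax theorem (K. Fan, "Minimax theorems", Theorem 2).
-/

noncomputable section

theorem fan_finite {X Y : Type*} [Nonempty X] (f : X → Y → ℝ)
    (hconvex : ∀ x₁ x₂ : X, ∀ α β : ℝ, 0 ≤ α → 0 ≤ β → α + β = 1 →
      ∃ x : X, ∀ y : Y, f x y ≤ α * f x₁ y + β * f x₂ y)
    (hconcave : ∀ y₁ y₂ : Y, ∀ α β : ℝ, 0 ≤ α → 0 ≤ β → α + β = 1 →
      ∃ y : Y, ∀ x : X, α * f x y₁ + β * f x y₂ ≤ f x y)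
    (c t : ℝ) (hct : c < t) (hc : ∀ y, ∃ x, f x y ≤ c) (s : Finset Y) :
    ∃ x, ∀ y ∈ s, f x y < t := by
  classical
  by_contra hno
  push Not at hno
  let A : Set (s → ℝ) := {v | ∃ x, ∀ i : s, f x i ≤ v i}
  let B : Set (s → ℝ) := Set.univ.pi fun _ => Set.Iio t
  have hA : Convex ℝ A := by
    rintro v ⟨x₁, h₁⟩ w ⟨x₂, h₂⟩ a b ha hb hab
    obtain ⟨x, hx⟩ := hconvex x₁ x₂ a b ha hb hab
    refine ⟨x, fun i => (hx i).trans ?_⟩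
    simp only [Pi.add_apply, Pi.smul_apply, smul_eq_mul]
    exact add_le_add (mul_le_mul_of_nonneg_left (h₁ i) ha) (mul_le_mul_of_nonneg_left (h₂ i) hb)
  have hB : Convex ℝ B := convex_pi fun _ _ => convex_Iio t
  have hBo : IsOpen B := isOpen_set_pi Set.finite_univ fun _ _ => isOpen_Iio
  have hdisj : Disjoint B A := by
    rw [Set.disjoint_left]
    rintro v hv ⟨x, hx⟩
    obtain ⟨y, hy, h⟩ := hno x
    have h1 := hx ⟨y, hy⟩
    have h2 : v ⟨y, hy⟩ < t := hv ⟨y, hy⟩ trivial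
    simp only at h1
    linarith
  obtain ⟨φ, u, hφB, hφA⟩ := geometric_hahn_banach_open hB hBo hA hdisj
  let l : s → ℝ := fun i => φ (Pi.single i 1)
  have hrep : ∀ v : s → ℝ, φ v = ∑ i, l i * v i := by
    intro v
    conv_lhs => rw [pi_eq_sum_univ' v]
    rw [map_sum]
    refine Finset.sum_congr rfl fun i _ => ?_
    rw [map_smul, smul_eq_mul, mul_comm]
  have hl : ∀ i, 0 ≤ l i := by
    intro i
    by_contra hneg
    push Not at hneg
    obtain ⟨x⟩ := ‹Nonempty X›
    let a : s → ℝ := fun i => f x i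
    have h0 : u ≤ φ a := hφA a ⟨x, fun _ => le_rfl⟩
    let r : ℝ := (φ a - u + 1) / (-(l i))
    have hr : 0 ≤ r := div_nonneg (by linarith) (by linarith)
    have h1 : u ≤ φ (a + r • Pi.single i 1) := by
      refine hφA _ ⟨x, fun j => ?_⟩
      have : 0 ≤ (Pi.single i 1 : s → ℝ) j := by
        by_cases h : j = i
        · subst h; simp
        · simp [h]
      simp only [Pi.add_apply, Pi.smul_apply, smul_eq_mul, a]
      have := mul_nonneg hr this
      linarith
    rw [map_add, map_smul, smul_eq_mul] at h1
    have h2 : r * l i = -(φ a - u + 1) := by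
      have : l i ≠ 0 := hneg.ne
      simp only [r]
      field_simp
    change u ≤ φ a + r * l i at h1
    linarith
  have hmid : φ (fun _ => (c + t) / 2) < u := hφB _ fun _ _ => by
    simp only [Set.mem_Iio]; linarith
  rw [hrep, ← Finset.sum_mul] at hmid
  have hux : ∀ x, u ≤ ∑ i, l i * f x i := fun x => by
    have := hφA (fun i => f x i) ⟨x, fun _ => le_rfl⟩
    rwa [hrep] at this
  have hL : 0 < ∑ i, l i := by
    refine lt_of_le_of_ne (Finset.sum_nonneg fun i _ => hl i) fun h => ?_
    have hz : ∀ i, l i = 0 := fun i =>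
      (Finset.sum_eq_zero_iff_of_nonneg fun i _ => hl i).1 h.symm i (Finset.mem_univ i)
    obtain ⟨x⟩ := ‹Nonempty X›
    have := hux x
    simp [hz] at this hmid
    linarith
  let C : Set (X → ℝ) := {v | ∃ y, ∀ x, v x ≤ f x y}
  have hC : Convex ℝ C := by
    rintro v ⟨y₁, h₁⟩ w ⟨y₂, h₂⟩ a b ha hb hab
    obtain ⟨y, hy⟩ := hconcave y₁ y₂ a b ha hb hab
    refine ⟨y, fun x => le_trans ?_ (hy x)⟩
    simp only [Pi.add_apply, Pi.smul_apply, smul_eq_mul]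
    exact add_le_add (mul_le_mul_of_nonneg_left (h₁ x) ha) (mul_le_mul_of_nonneg_left (h₂ x) hb)
  have hmem : ∑ i : s, (l i / ∑ j, l j) • (fun x => f x i) ∈ C := by
    refine hC.sum_mem (fun i _ => div_nonneg (hl i) hL.le) ?_ fun i _ => ⟨i, fun _ => le_rfl⟩
    rw [← Finset.sum_div, div_self hL.ne']
  obtain ⟨y, hy⟩ := hmem
  obtain ⟨x, hx⟩ := hc y
  have h1 := (hy x).trans hx
  simp only [Finset.sum_apply, Pi.smul_apply, smul_eq_mul, div_mul_eq_mul_div] at h1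
  rw [← Finset.sum_div, div_le_iff₀ hL] at h1
  have h2 := hux x
  nlinarith

/-- **Fan's minimax theorem.** Let `X` be a nonempty compact Hausdorff space and `Y`
an arbitrary nonempty set. Let `f : X × Y → ℝ` be lower semicontinuous in `x` for
every fixed `y`, convex on `X` in the sense of Fan and concave on `Y` in the sense of
Fan. Then the minimum over `x ∈ X` of `sup_{y ∈ Y} f(x,y)` is attained, and
`min_{x ∈ X} sup_{y ∈ Y} f(x,y) = sup_{y ∈ Y} min_{x ∈ X} f(x,y)`
(an equality in the extended reals, as the suprema may be `+∞`). -/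
theorem fan_minimax {X Y : Type*} [TopologicalSpace X] [CompactSpace X] [T2Space X]
    [Nonempty X] [Nonempty Y] (f : X → Y → ℝ)
    (hlsc : ∀ y : Y, LowerSemicontinuous fun x : X => f x y)
    (hconvex : ∀ x₁ x₂ : X, ∀ α β : ℝ, 0 ≤ α → 0 ≤ β → α + β = 1 →
      ∃ x : X, ∀ y : Y, f x y ≤ α * f x₁ y + β * f x₂ y)
    (hconcave : ∀ y₁ y₂ : Y, ∀ α β : ℝ, 0 ≤ α → 0 ≤ β → α + β = 1 →
      ∃ y : Y, ∀ x : X, α * f x y₁ + β * f x y₂ ≤ f x y) :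
    ∃ x₀ : X, (∀ x : X, (⨆ y : Y, ((f x₀ y : ℝ) : EReal)) ≤ ⨆ y : Y, ((f x y : ℝ) : EReal)) ∧
      (⨆ y : Y, ((f x₀ y : ℝ) : EReal)) = ⨆ y : Y, ⨅ x : X, ((f x y : ℝ) : EReal) := by
  set V : EReal := ⨆ y : Y, ⨅ x : X, ((f x y : ℝ) : EReal) with hV
  have hVle : ∀ x, V ≤ ⨆ y : Y, ((f x y : ℝ) : EReal) := fun x =>
    iSup_mono fun y => iInf_le _ x
  suffices h : ∃ x₀, ∀ y, ((f x₀ y : ℝ) : EReal) ≤ V by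
    obtain ⟨x₀, h⟩ := h
    have h' := iSup_le h
    exact ⟨x₀, fun x => h'.trans (hVle x), le_antisymm h' (hVle x₀)⟩
  have hmin : ∀ y, ∃ x, ∀ x', f x y ≤ f x' y := fun y => by
    obtain ⟨x, -, hx⟩ := ((hlsc y).lowerSemicontinuousOn Set.univ).exists_isMinOn
      Set.univ_nonempty isCompact_univ
    exact ⟨x, fun x' => hx (Set.mem_univ x')⟩
  have hmV : ∀ y, ∃ x, ((f x y : ℝ) : EReal) ≤ V := fun y => by
    obtain ⟨x, hx⟩ := hmin y
    exact ⟨x, le_trans (le_iInf fun x' => EReal.coe_le_coe_iff.2 (hx x'))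
      (le_iSup (fun y => ⨅ x : X, ((f x y : ℝ) : EReal)) y)⟩
  clear_value V
  induction V with
  | bot =>
    obtain ⟨x, hx⟩ := hmV (Classical.arbitrary Y)
    simp at hx
  | top => exact ⟨Classical.arbitrary X, fun _ => le_top⟩
  | coe c =>
    simp only [EReal.coe_le_coe_iff] at hmV ⊢
    have key : (⋂ p : Y × Set.Ioi c, {x | f x p.1 ≤ p.2}).Nonempty := by
      refine CompactSpace.iInter_nonempty (fun p => (hlsc p.1).isClosed_preimage p.2) ?_
      intro s
      classical
      obtain ⟨t, hct, ht⟩ : ∃ t, c < t ∧ ∀ p ∈ s, t ≤ (p.2 : ℝ) := by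
        induction s using Finset.induction_on with
        | empty => exact ⟨c + 1, by linarith, by simp⟩
        | insert p s _ ih =>
          obtain ⟨t, h1, h2⟩ := ih
          refine ⟨min t p.2, lt_min h1 p.2.2, fun q hq => ?_⟩
          rcases Finset.mem_insert.1 hq with rfl | hq
          · exact min_le_right _ _
          · exact (min_le_left _ _).trans (h2 q hq)
      obtain ⟨x, hx⟩ := fan_finite f hconvex hconcave c t hct hmV (s.image Prod.fst)
      refine ⟨x, Set.mem_iInter₂.2 fun p hp => ?_⟩
      exact (hx p.1 (Finset.mem_image_of_mem _ hp)).le.trans (ht p hp)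
    obtain ⟨x, hx⟩ := key
    refine ⟨x, fun y => le_of_forall_gt_imp_ge_of_dense fun t ht => ?_⟩
    exact Set.mem_iInter.1 hx (y, ⟨t, ht⟩)
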